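/- Bending lemma: the function g(r) := (2/(p−1)) u(r) + r u'(r) satisfies g'(r) = (2/(p−1) − (N−2)) u'(r) − r u(r)^p < 0 for all r ∈ (0,1), so g is strictly decreasing on (0,1]; moreover g(0) = (2/(p−1)) u(0) > 0 and g(1) = u'(1) < 0, hence there exists a unique r^t ∈ (0,1) such that g > 0 on (0, r^t), g(r^t) = 0, and g < 0 on (r^t, 1]. -/

import Mathlib

/-!
On `(0,1)` the equation gives `r u'' = -(N-1) u' - r u^p`, so differentiating
`g = (2/(p-1)) u + r u'` yields `g' = (2/(p-1) - (N-2)) u' - r u^p`. The coefficient of `u'` is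
positive by subcriticality (`bending_coeff_pos`), and `u' < 0 < u^p`, hence `g' < 0`. As `g` is
continuous on the closed interval (`bendG_continuousOn`), it is strictly decreasing on `[0,1]`
with `g(0) > 0 > g(1)`; the intermediate value theorem gives its zero, and monotonicity gives
the signs and the uniqueness.
-/

open Set Filter

noncomputable section

/-- The bending function `g(r) = (2/(p-1)) u(r) + r u'(r)`. -/
def bendG (p : ℝ) (u : ℝ → ℝ) (r : ℝ) : ℝ :=
  (2 / (p - 1)) * u r + r * deriv u r

lemma bending_coeff_pos {N : ℕ} (hN : 2 ≤ N) {p : ℝ} (hp1 : 1 < p)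
    (hpN : 3 ≤ N → p < (N : ℝ) / ((N : ℝ) - 2)) : 0 < 2 / (p - 1) - ((N : ℝ) - 2) := by
  have hp : 0 < p - 1 := by linarith
  rw [sub_pos, lt_div_iff₀ hp]
  rcases hN.eq_or_lt with h | h
  · subst h
    norm_num
  · have h3 : (3 : ℝ) ≤ N := by exact_mod_cast h
    have := hpN h
    rw [lt_div_iff₀ (by linarith)] at this
    linarith

/-- Continuity of `g` up to the boundary. The two-sided `deriv u` is replaced by the derivative
within `[0,1]`: they agree on `(0,1]` (at `1`, `deriv u 1 ≠ 0` forces differentiability), and at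
`0`, where `deriv u 0` may be a junk value, the factor `r` vanishes. -/
lemma bendG_continuousOn (p : ℝ) {u : ℝ → ℝ} (hreg : ContDiffOn ℝ 2 u (Icc 0 1))
    (hu' : ∀ r ∈ Ioc (0 : ℝ) 1, deriv u r < 0) : ContinuousOn (bendG p u) (Icc 0 1) := by
  have huniq : UniqueDiffOn ℝ (Icc (0 : ℝ) 1) := uniqueDiffOn_Icc one_pos
  have hv : ContinuousOn (derivWithin u (Icc 0 1)) (Icc 0 1) :=
    hreg.continuousOn_derivWithin huniq (by norm_num)
  have hc : ContinuousOn (fun r => (2 / (p - 1)) * u r + r * derivWithin u (Icc 0 1) r)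
      (Icc 0 1) :=
    (continuousOn_const.mul hreg.continuousOn).add (continuousOn_id.mul hv)
  refine hc.congr fun r hr => ?_
  rcases hr.1.eq_or_lt with h | h
  · subst h
    simp [bendG]
  · have hd : DifferentiableAt ℝ u r :=
      differentiableAt_of_deriv_ne_zero (hu' r ⟨h, hr.2⟩).ne
    simp only [bendG, hd.derivWithin (huniq r hr)]

/-- bending lemma.  `g(r) = (2/(p-1)) u(r) + r u'(r)` has derivative
`g'(r) = (2/(p-1) - (N-2)) u'(r) - r u(r)^p < 0` on `(0,1)`, hence is strictly
decreasing on `(0,1]`; moreover `g(0) = (2/(p-1)) u(0) > 0` and `g(1) = u'(1) < 0`,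
so there is a unique `r^t ∈ (0,1)` with `g > 0` on `(0, r^t)`, `g(r^t) = 0` and
`g < 0` on `(r^t, 1]`. -/
theorem bending_lemma
    {N : ℕ} (hN : 2 ≤ N) (p : ℝ) (hp1 : 1 < p)
    (hpN : 3 ≤ N → p < (N : ℝ) / ((N : ℝ) - 2))
    (u : ℝ → ℝ)
    (hreg : ContDiffOn ℝ 2 u (Icc 0 1))
    (hpos : ∀ r ∈ Ico (0 : ℝ) 1, 0 < u r)
    (hu1 : u 1 = 0)
    (hu' : ∀ r ∈ Ioc (0 : ℝ) 1, deriv u r < 0)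
    (hu'0 : deriv u 0 = 0)
    (hode : ∀ r ∈ Ioo (0 : ℝ) 1,
      deriv (deriv u) r + (((N : ℝ) - 1) / r) * deriv u r = -(u r ^ p)) :
    (∀ r ∈ Ioo (0 : ℝ) 1,
      HasDerivAt (bendG p u)
        ((2 / (p - 1) - ((N : ℝ) - 2)) * deriv u r - r * u r ^ p) r ∧
      (2 / (p - 1) - ((N : ℝ) - 2)) * deriv u r - r * u r ^ p < 0) ∧
    StrictAntiOn (bendG p u) (Ioc 0 1) ∧
    (bendG p u 0 = (2 / (p - 1)) * u 0 ∧ 0 < bendG p u 0) ∧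
    (bendG p u 1 = deriv u 1 ∧ bendG p u 1 < 0) ∧
    ∃ rt ∈ Ioo (0 : ℝ) 1,
      (∀ r ∈ Ioo (0 : ℝ) rt, 0 < bendG p u r) ∧ bendG p u rt = 0 ∧
      (∀ r ∈ Ioc rt 1, bendG p u r < 0) ∧
      ∀ rt' ∈ Ioo (0 : ℝ) 1, bendG p u rt' = 0 → rt' = rt := by
  have hA := bending_coeff_pos hN hp1 hpN
  have hcont := bendG_continuousOn p hreg hu'
  have hder : ∀ r ∈ Ioo (0 : ℝ) 1,
      HasDerivAt (bendG p u)
        ((2 / (p - 1) - ((N : ℝ) - 2)) * deriv u r - r * u r ^ p) r ∧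
      (2 / (p - 1) - ((N : ℝ) - 2)) * deriv u r - r * u r ^ p < 0 := by
    intro r hr
    have hC : ContDiffAt ℝ 2 u r := hreg.contDiffAt (Icc_mem_nhds hr.1 hr.2)
    have h1 : HasDerivAt u (deriv u r) r := (hC.differentiableAt (by norm_num)).hasDerivAt
    have h2 : HasDerivAt (deriv u) (deriv (deriv u) r) r :=
      ((hC.derivWithin (m := 1) (by norm_num)).differentiableAt (by norm_num)).hasDerivAt
    have hrp := mul_pos hr.1 (Real.rpow_pos_of_pos (hpos r ⟨hr.1.le, hr.2⟩) p)
    refine ⟨?_, by linarith [mul_neg_of_pos_of_neg hA (hu' r ⟨hr.1, hr.2.le⟩)]⟩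
    have h3 := (h1.const_mul (2 / (p - 1))).add ((hasDerivAt_id r).mul h2)
    refine h3.congr_deriv ?_
    have ho : deriv (deriv u) r = -(u r ^ p) - (((N : ℝ) - 1) / r) * deriv u r := by
      linarith [hode r hr]
    have hr0 : r ≠ 0 := hr.1.ne'
    have hmul : r * (((N : ℝ) - 1) / r) = (N : ℝ) - 1 := mul_div_cancel₀ _ hr0
    simp only [id, ho]
    linear_combination (-deriv u r) * hmul
  have hanti : StrictAntiOn (bendG p u) (Icc 0 1) := by
    refine strictAntiOn_of_deriv_neg (convex_Icc 0 1) hcont fun r hr => ?_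
    rw [interior_Icc] at hr
    rw [(hder r hr).1.deriv]
    exact (hder r hr).2
  have h0 : bendG p u 0 = (2 / (p - 1)) * u 0 := by simp [bendG]
  have h0pos : 0 < bendG p u 0 := by
    rw [h0]
    exact mul_pos (div_pos two_pos (by linarith)) (hpos 0 ⟨le_rfl, one_pos⟩)
  have h1 : bendG p u 1 = deriv u 1 := by simp [bendG, hu1]
  have h1neg : bendG p u 1 < 0 := h1 ▸ hu' 1 ⟨one_pos, le_rfl⟩
  obtain ⟨t, ht, hgt⟩ := intermediate_value_Ioo' zero_le_one hcont ⟨h1neg, h0pos⟩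
  have htI : t ∈ Icc (0 : ℝ) 1 := Ioo_subset_Icc_self ht
  refine ⟨hder, hanti.mono Ioc_subset_Icc_self, ⟨h0, h0pos⟩, ⟨h1, h1neg⟩, t, ht, ?_, hgt, ?_, ?_⟩
  · intro r hr
    exact hgt ▸ hanti ⟨hr.1.le, (hr.2.trans ht.2).le⟩ htI hr.2
  · intro r hr
    exact hgt ▸ hanti htI ⟨(ht.1.trans hr.1).le, hr.2⟩ hr.1
  · intro s hs hgs
    exact hanti.injOn (Ioo_subset_Icc_self hs) htI (hgs.trans hgt.symm)

end
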